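/- Let $R_0$ be an arbitrary commutative Noetherian ring, $\mathfrak{f} \geq 4$, $\mathcal{R} = R_0[x_{i,j}; t_i]$, and $J = \operatorname{Pf}_4(\mathbf{X}) + I_1(\mathbf{t}\mathbf{X})$. Then $\mathcal{R}/J$ is an integral domain if and only if $R_0$ is an integral domain; and $\mathcal{R}/J$ is a normal ring if and only if $R_0$ is normal. -/

import Mathlib

open CategoryTheory

noncomputable section
namespace AluffiStmt

universe u

/-- The index set for the entries of a generic `f × f` alternating matrix:
pairs `(i, j)` with `i < j`. -/
abbrev P2 (f : ℕ) := {p : Fin f × Fin f // p.1 < p.2}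

/-- `l` is a (weakly) regular sequence on `R`: each entry is a nonzerodivisor
modulo the ideal generated by the previous entries. -/
def IsRegSeq (R : Type*) [CommRing R] (l : List R) : Prop :=
  ∀ (i : ℕ) (h : i < l.length) (x : R),
    l.get ⟨i, h⟩ * x ∈ Ideal.span {y | y ∈ l.take i} →
      x ∈ Ideal.span {y | y ∈ l.take i}

/-- The grade of an ideal: the supremum of lengths of regular sequences on `R`
contained in `I`. -/
def grade {R : Type*} [CommRing R] (I : Ideal R) : ℕ :=
  sSup {n | ∃ l : List R, l.length = n ∧ (∀ r ∈ l, r ∈ I) ∧ IsRegSeq R l}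

/-- Projective dimension at most `n`, expressed by vanishing of `Ext^i (M, -)`
for all `i > n`. -/
def projDimLE (R : Type u) [CommRing R] (M : ModuleCat.{u} R) (n : ℕ) : Prop :=
  ∀ (N : ModuleCat.{u} R) (i : ℕ), n < i →
    Subsingleton (((Ext R (ModuleCat.{u} R) i).obj (Opposite.op M)).obj N)

/-- `M` has projective dimension exactly `n`. -/
def projDimEq (R : Type u) [CommRing R] (M : ModuleCat.{u} R) (n : ℕ) : Prop :=
  projDimLE R M n ∧ ∀ k : ℕ, projDimLE R M k → n ≤ k

/-- An ideal `I` is perfect if `grade I = pd_R (R/I)`. -/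
def IsPerfectIdeal (R : Type u) [CommRing R] (I : Ideal R) : Prop :=
  projDimEq R (ModuleCat.of R (R ⧸ I)) (grade I)
/-- Variables for the ring `𝓡 = R₀[x_{i,j}; t_i]`. -/
abbrev Var (f : ℕ) := P2 f ⊕ Fin f

/-- The `(i,j)` entry of the generic alternating matrix `X` in `𝓡`. -/
def xvt (R₀ : Type u) [CommRing R₀] (f : ℕ) (i j : Fin f) : MvPolynomial (Var f) R₀ :=
  if h : i < j then MvPolynomial.X (Sum.inl ⟨(i, j), h⟩)
  else if h : j < i then - MvPolynomial.X (Sum.inl ⟨(j, i), h⟩) else 0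

/-- The entry `t_i` of the generic row vector `t` in `𝓡`. -/
def tvt (R₀ : Type u) [CommRing R₀] (f : ℕ) (i : Fin f) : MvPolynomial (Var f) R₀ :=
  MvPolynomial.X (Sum.inr i)

/-- The Pfaffian of the `4 × 4` principal submatrix of `X` with rows/columns
`i < j < k < l`. -/
def pf4t (R₀ : Type u) [CommRing R₀] (f : ℕ) (i j k l : Fin f) : MvPolynomial (Var f) R₀ :=
  xvt R₀ f i j * xvt R₀ f k l - xvt R₀ f i k * xvt R₀ f j l + xvt R₀ f i l * xvt R₀ f j k

/-- The ideal `Pf₄(X)` of `𝓡`. -/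
def Pf4t (R₀ : Type u) [CommRing R₀] (f : ℕ) : Ideal (MvPolynomial (Var f) R₀) :=
  Ideal.span {p | ∃ i j k l : Fin f, i < j ∧ j < k ∧ k < l ∧ p = pf4t R₀ f i j k l}

/-- The `j`-th entry of the row vector `t·X`. -/
def tX (R₀ : Type u) [CommRing R₀] (f : ℕ) (j : Fin f) : MvPolynomial (Var f) R₀ :=
  ∑ i : Fin f, tvt R₀ f i * xvt R₀ f i j

/-- The ideal `I₁(t·X)` generated by the entries of `t·X`. -/
def ItX (R₀ : Type u) [CommRing R₀] (f : ℕ) : Ideal (MvPolynomial (Var f) R₀) :=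
  Ideal.span {p | ∃ j : Fin f, p = tX R₀ f j}

/-- The ideal `J = Pf₄(X) + I₁(t·X)`. -/
def Jt (R₀ : Type u) [CommRing R₀] (f : ℕ) : Ideal (MvPolynomial (Var f) R₀) :=
  Pf4t R₀ f + ItX R₀ f
/-- A commutative ring is normal if its localization at every prime ideal is
an integrally closed domain. -/
def IsNormalRing (R : Type u) [CommRing R] : Prop :=
  ∀ (P : Ideal R) [P.IsPrime],
    IsDomain (Localization.AtPrime P) ∧ IsIntegrallyClosed (Localization.AtPrime P)

/-!
A standard monomial theory controls `𝓡/J`. The variables embed in a product of three chains so that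
the product of two incomparable variables is, modulo `J`, a combination of products of smaller
weight; hence the monomials supported on chains span `𝓡/J`. They are also linearly independent: at
a suitable point of `𝓡/J` over a polynomial ring, whose matrix is given by the `2 × 2` minors of a
matrix with two rows, their leading terms are distinct, because a chain in a product of chains is
determined by its projections. So `J` is the kernel of a map to a polynomial ring, and `𝓡/J` is a
domain when `R₀` is.

Where an entry `x_{p,q}` of `X` is inverted, the Pfaffians and the entries of `tX` can be solved for
the other variables, and `𝓡/J` becomes a localized polynomial ring over `R₀`. For `f ≥ 4` there are
two entries comparable to all the variables, and by standard monomials they form a regular sequence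
on `𝓡/J`; an element integral over `𝓡/J` lies in both localizations, hence in `𝓡/J`. Normality for a
general `R₀` follows by localizing `R₀`, and both converses from the retraction `𝓡/J → R₀`.
-/

universe v

section TopCoeff

variable {A : Type*} [CommRing A] {P Q : Polynomial A} {m n : ℕ} {c d : A}

/-- `c` is the coefficient of `P` in a degree `n` bounding that of `P`. Both `P` and `c` may vanish,
which makes the notion compatible with sums and products over any ring. -/
def HasTopCoeff (P : Polynomial A) (n : ℕ) (c : A) : Prop :=
  P.natDegree ≤ n ∧ P.coeff n = c

namespace HasTopCoeff

theorem one : HasTopCoeff (1 : Polynomial A) 0 1 :=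
  ⟨Polynomial.natDegree_one.le, Polynomial.coeff_one_zero⟩

theorem C_mul_X_pow (c : A) (n : ℕ) : HasTopCoeff (Polynomial.C c * Polynomial.X ^ n) n c :=
  ⟨Polynomial.natDegree_C_mul_X_pow_le c n, by simp⟩

theorem C (c : A) : HasTopCoeff (Polynomial.C c) 0 c :=
  ⟨(Polynomial.natDegree_C c).le, Polynomial.coeff_C_zero⟩

theorem mul (hP : HasTopCoeff P m c) (hQ : HasTopCoeff Q n d) :
    HasTopCoeff (P * Q) (m + n) (c * d) :=
  ⟨Polynomial.natDegree_mul_le_of_le hP.1 hQ.1, by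
    rw [Polynomial.coeff_mul_add_eq_of_natDegree_le hP.1 hQ.1, hP.2, hQ.2]⟩

theorem pow (hP : HasTopCoeff P n c) (k : ℕ) : HasTopCoeff (P ^ k) (k * n) (c ^ k) :=
  ⟨Polynomial.natDegree_pow_le_of_le k hP.1, by
    rw [Polynomial.coeff_pow_of_natDegree_le hP.1, hP.2]⟩

theorem add (hP : HasTopCoeff P n c) (hQ : HasTopCoeff Q n d) : HasTopCoeff (P + Q) n (c + d) :=
  ⟨Polynomial.natDegree_add_le_of_degree_le hP.1 hQ.1, by rw [Polynomial.coeff_add, hP.2, hQ.2]⟩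

theorem sub (hP : HasTopCoeff P n c) (hQ : HasTopCoeff Q n d) : HasTopCoeff (P - Q) n (c - d) :=
  ⟨Polynomial.natDegree_sub_le_of_le hP.1 hQ.1 |>.trans (max_self n).le,
    by rw [Polynomial.coeff_sub, hP.2, hQ.2]⟩

theorem neg (hP : HasTopCoeff P n c) : HasTopCoeff (-P) n (-c) :=
  ⟨(Polynomial.natDegree_neg P).trans_le hP.1, by rw [Polynomial.coeff_neg, hP.2]⟩

theorem of_lt (hP : HasTopCoeff P m c) (h : m < n) : HasTopCoeff P n 0 :=
  ⟨hP.1.trans h.le, Polynomial.coeff_eq_zero_of_natDegree_lt (hP.1.trans_lt h)⟩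

theorem sum {ι : Type*} {s : Finset ι} {P : ι → Polynomial A} {c : ι → A}
    (h : ∀ i ∈ s, HasTopCoeff (P i) n (c i)) : HasTopCoeff (∑ i ∈ s, P i) n (∑ i ∈ s, c i) :=
  ⟨Polynomial.natDegree_sum_le_of_forall_le s P fun i hi => (h i hi).1, by
    rw [Polynomial.finsetSum_coeff]; exact Finset.sum_congr rfl fun i hi => (h i hi).2⟩

theorem sum_of_forall_ne {ι : Type*} [Fintype ι] {P : ι → Polynomial A} {i : ι}
    (hi : HasTopCoeff (P i) n c) (h : ∀ j, j ≠ i → HasTopCoeff (P j) n 0) :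
    HasTopCoeff (∑ j, P j) n c := by
  classical
  rw [← Finset.add_sum_erase _ _ (Finset.mem_univ i)]
  simpa only [Finset.sum_const_zero, add_zero] using
    hi.add (.sum fun j hj => h j (Finset.ne_of_mem_erase hj))

end HasTopCoeff

end TopCoeff

section StandardMonomials

open MvPolynomial

variable {σ τ R : Type*} [CommRing R]

/-- The span of the *standard monomials*, those whose variables form a chain for `r`. -/
def chainSpan (R : Type*) [CommRing R] (r : σ → σ → Prop) : Submodule R (MvPolynomial σ R) :=
  restrictSupport R {m | IsChain r (m.support : Set σ)}

/-- The span of the products of two variables of total weight less than `B`. -/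
def lightQuadrics (R : Type*) [CommRing R] (ω : σ → ℕ) (B : ℕ) : Submodule R (MvPolynomial σ R) :=
  Submodule.span R {q | ∃ a b, ω a + ω b < B ∧ q = X a * X b}

theorem mul_monomial_mem_of_mem_lightQuadrics {ω : σ → ℕ} {B : ℕ} {m : σ →₀ ℕ}
    {N : Submodule R (MvPolynomial σ R)}
    (hN : ∀ m' : σ →₀ ℕ, Finsupp.weight ω m' < B + Finsupp.weight ω m → monomial m' 1 ∈ N)
    {q : MvPolynomial σ R} (hq : q ∈ lightQuadrics R ω B) : q * monomial m 1 ∈ N := by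
  refine (Submodule.span_le (p := N.comap (LinearMap.mulRight R (monomial m 1)))).2 ?_ hq
  rintro _ ⟨a, b, hab, rfl⟩
  have hmon : X a * X b * monomial m (1 : R) =
      monomial (Finsupp.single a 1 + Finsupp.single b 1 + m) 1 := by
    simp only [X, monomial_mul, one_mul]
  simp only [Submodule.comap_coe, Set.mem_preimage, LinearMap.mulRight_apply, SetLike.mem_coe, hmon]
  refine hN _ ?_
  simp only [map_add, Finsupp.weight_single, one_smul]
  omega

theorem exists_single_add_single_add_eq {m : σ →₀ ℕ} {u v : σ} (hu : u ∈ m.support)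
    (hv : v ∈ m.support) (huv : u ≠ v) :
    ∃ m', m = Finsupp.single u 1 + Finsupp.single v 1 + m' := by
  classical
  refine le_iff_exists_add.1 fun x => ?_
  rw [Finsupp.mem_support_iff] at hu hv
  simp only [Finsupp.add_apply, Finsupp.single_apply]
  split_ifs <;> grind

/-- Straightening terminates because each step lowers the weight. -/
theorem sup_chainSpan_eq_top {J : Ideal (MvPolynomial σ R)} {ω : σ → ℕ} {r : σ → σ → Prop}
    (h : ∀ u v, u ≠ v → ¬r u v → ¬r v u →
      X u * X v ∈ J.restrictScalars R ⊔ lightQuadrics R ω (ω u + ω v)) :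
    J.restrictScalars R ⊔ chainSpan R r = ⊤ := by
  set N := J.restrictScalars R ⊔ chainSpan R r
  suffices hmon : ∀ k (m : σ →₀ ℕ), Finsupp.weight ω m = k → monomial m (1 : R) ∈ N by
    refine Submodule.eq_top_iff'.2 fun q => ?_
    rw [q.as_sum]
    refine N.sum_mem fun m _ => ?_
    simpa only [smul_monomial, smul_eq_mul, mul_one] using N.smul_mem (coeff m q) (hmon _ m rfl)
  intro k
  induction k using Nat.strong_induction_on with
  | _ k ih =>
    rintro m rfl
    by_cases hm : IsChain r (m.support : Set σ)
    · exact Submodule.mem_sup_right ((monomial_mem_restrictSupport R).2 (Or.inl hm))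
    simp only [IsChain, Set.Pairwise, not_forall, not_or, Finset.mem_coe] at hm
    obtain ⟨u, hu, v, hv, huv, hruv, hrvu⟩ := hm
    obtain ⟨m', rfl⟩ := exists_single_add_single_add_eq hu hv huv
    obtain ⟨j, hj, q, hq, hjq⟩ := Submodule.mem_sup.1 (h u v huv hruv hrvu)
    have hmon : monomial (Finsupp.single u 1 + Finsupp.single v 1 + m') (1 : R) =
        j * monomial m' 1 + q * monomial m' 1 := by
      rw [← add_mul, hjq]
      simp only [X, monomial_mul, one_mul]
    rw [hmon]
    refine N.add_mem (Submodule.mem_sup_left (J.mul_mem_right _ hj))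
      (mul_monomial_mem_of_mem_lightQuadrics (fun m'' hm'' => ih _ ?_ m'' rfl) hq)
    simpa only [map_add, Finsupp.weight_single, one_smul] using hm''

variable {φ : MvPolynomial σ R →ₐ[R] Polynomial (MvPolynomial τ R)} {w : σ → ℕ} {e : σ → τ →₀ ℕ}

theorem exists_hasTopCoeff_monomial
    (hφ : ∀ v, ∃ ε : Rˣ, HasTopCoeff (φ (X v)) (w v) (monomial (e v) (ε : R))) (m : σ →₀ ℕ) :
    ∃ ε : Rˣ, HasTopCoeff (φ (monomial m 1)) (Finsupp.weight w m)
      (monomial (Finsupp.weight e m) (ε : R)) := by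
  induction m using Finsupp.induction_linear with
  | zero => exact ⟨1, by simpa using HasTopCoeff.one⟩
  | add m m' ih ih' =>
    obtain ⟨ε, h⟩ := ih
    obtain ⟨ε', h'⟩ := ih'
    refine ⟨ε * ε', ?_⟩
    simpa only [← map_mul, monomial_mul, one_mul, map_add, Units.val_mul] using h.mul h'
  | single v k =>
    obtain ⟨ε, h⟩ := hφ v
    refine ⟨ε ^ k, ?_⟩
    simpa only [← map_pow, X_pow_eq_monomial, monomial_pow, Finsupp.weight_single, smul_eq_mul,
      Units.val_pow_eq_pow_val] using h.pow k

/-- Among the monomials of `p` of greatest weight, the leading terms of the images are distinct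
monomials, so they cannot cancel. -/
theorem disjoint_ker_restrictSupport
    (hφ : ∀ v, ∃ ε : Rˣ, HasTopCoeff (φ (X v)) (w v) (monomial (e v) (ε : R)))
    {St : Set (σ →₀ ℕ)} (he : St.InjOn (Finsupp.weight e)) :
    Disjoint (LinearMap.ker φ.toLinearMap) (restrictSupport R St) := by
  classical
  refine Submodule.disjoint_def.2 fun p hp0 hpSt => ?_
  by_contra hne
  obtain ⟨m₀, hm₀, hmax⟩ := Finset.exists_max_image p.support (Finsupp.weight w)
    (by simpa using hne)
  choose ε hε using exists_hasTopCoeff_monomial hφ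
  have hexpand : φ p = ∑ m ∈ p.support, coeff m p • φ (monomial m 1) := by
    conv_lhs => rw [p.as_sum]
    simp only [map_sum, ← map_smul, smul_eq_mul, mul_one]
  have hcoeff : coeff (Finsupp.weight e m₀) ((φ p).coeff (Finsupp.weight w m₀)) =
      coeff m₀ p * ε m₀ := by
    rw [hexpand, Polynomial.finsetSum_coeff, MvPolynomial.coeff_sum, Finset.sum_eq_single m₀]
    · rw [Polynomial.coeff_smul, (hε m₀).2, coeff_smul, coeff_monomial, if_pos rfl, smul_eq_mul]
    · intro m hm hmm₀
      rw [Polynomial.coeff_smul, coeff_smul]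
      rcases (hmax m hm).lt_or_eq with hlt | heq
      · rw [((hε m).of_lt hlt).2, coeff_zero, smul_zero]
      · have hexp : Finsupp.weight e m ≠ Finsupp.weight e m₀ := fun h =>
          hmm₀ (he (hpSt hm) (hpSt hm₀) h)
        rw [← heq, (hε m).2, coeff_monomial, if_neg hexp, smul_zero]
    · exact fun h => absurd hm₀ h
  rw [show φ p = 0 from hp0, Polynomial.coeff_zero, coeff_zero, eq_comm,
    Units.mul_left_eq_zero] at hcoeff
  exact mem_support_iff.1 hm₀ hcoeff

theorem ker_eq_of_disjoint_chainSpan {J : Ideal (MvPolynomial σ R)} {r : σ → σ → Prop}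
    (hJ : J ≤ RingHom.ker φ) (htop : J.restrictScalars R ⊔ chainSpan R r = ⊤)
    (hdisj : Disjoint (LinearMap.ker φ.toLinearMap) (chainSpan R r)) : RingHom.ker φ = J := by
  have hle : J.restrictScalars R ≤ LinearMap.ker φ.toLinearMap := hJ
  have hker : J.restrictScalars R = LinearMap.ker φ.toLinearMap :=
    eq_of_le_of_inf_le_of_sup_le hle (hdisj.eq_bot.le.trans bot_le) (le_top.trans htop.ge)
  ext q
  exact (SetLike.ext_iff.1 hker q).symm

variable {J : Ideal (MvPolynomial σ R)} {r : σ → σ → Prop}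

theorem mk_X_ne_zero [Nontrivial R] (hJ : Disjoint (J.restrictScalars R) (chainSpan R r)) (v : σ) :
    Ideal.Quotient.mk J (X v) ≠ 0 := fun h =>
  X_ne_zero (R := R) v <| Submodule.disjoint_def.1 hJ (X v) (Ideal.Quotient.eq_zero_iff_mem.1 h) <|
    (monomial_mem_restrictSupport R).2 <| Or.inl <| by
      rw [Set.mem_ofPred_eq, Finsupp.support_single v one_ne_zero, Finset.coe_singleton]
      exact IsChain.singleton

theorem X_mul_mem_chainSpan {c : σ} (hc : ∀ v, r c v ∨ r v c) {p : MvPolynomial σ R}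
    (hp : p ∈ chainSpan R r) : X c * p ∈ chainSpan R r := by
  classical
  rw [chainSpan, mem_restrictSupport_iff] at hp ⊢
  intro m hm
  rw [Finset.mem_coe, support_X_mul, Finset.mem_map] at hm
  obtain ⟨m', hm', rfl⟩ := hm
  have hsupp : ((addLeftEmbedding (Finsupp.single c 1) m').support : Set σ) ⊆
      insert c (m'.support : Set σ) := by
    intro v hv
    by_contra hvm
    simp only [Set.mem_insert_iff, Finset.mem_coe, Finsupp.mem_support_iff, not_or, not_not] at hvm
    simp [hvm.2, Ne.symm hvm.1] at hv
  exact ((hp hm').insert fun v _ _ => hc v).mono hsupp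

/-- In the basis of standard monomials, multiplication by `X c` and `X d` is multiplication of
monomials. -/
theorem mk_X_dvd_of_dvd_mul [IsDomain R] (hJ : IsCompl (J.restrictScalars R) (chainSpan R r))
    {c d : σ} (hcd : c ≠ d) (hc : ∀ v, r c v ∨ r v c) (hd : ∀ v, r d v ∨ r v d)
    {a : MvPolynomial σ R ⧸ J}
    (h : Ideal.Quotient.mk J (X c) ∣ Ideal.Quotient.mk J (X d) * a) :
    Ideal.Quotient.mk J (X c) ∣ a := by
  have hrep : ∀ a : MvPolynomial σ R ⧸ J, ∃ p ∈ chainSpan R r, Ideal.Quotient.mk J p = a := by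
    intro a
    obtain ⟨q, rfl⟩ := Ideal.Quotient.mk_surjective a
    obtain ⟨j, hj, p, hp, rfl⟩ := Submodule.mem_sup.1 (hJ.sup_eq_top ▸ Submodule.mem_top (x := q))
    refine ⟨p, hp, ?_⟩
    rw [map_add, Ideal.Quotient.eq_zero_iff_mem.2 hj, zero_add]
  obtain ⟨p, hp, rfl⟩ := hrep a
  obtain ⟨b, hb⟩ := h
  obtain ⟨q, hq, rfl⟩ := hrep b
  have hmem : X d * p - X c * q ∈ J := by
    rw [← Ideal.Quotient.eq_zero_iff_mem, map_sub, map_mul, map_mul, hb, sub_self]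
  have hzero : X d * p - X c * q = 0 := Submodule.disjoint_def.1 hJ.disjoint _ hmem <|
    Submodule.sub_mem _ (X_mul_mem_chainSpan hd hp) (X_mul_mem_chainSpan hc hq)
  rcases X_dvd_mul_iff.1 ⟨q, sub_eq_zero.1 hzero⟩ with hdvd | hdvd
  · exact absurd (X_dvd_X.1 hdvd) hcd
  · exact map_dvd _ hdvd

end StandardMonomials

section Chains

variable {σ ι α : Type*} {e : σ → ι → α}

theorem exists_mem_forall_mem_le_of_isChain [Preorder α] {s : Multiset σ}
    (hs : IsChain (fun u v => e u ≤ e v) {v | v ∈ s}) (hne : s ≠ 0) :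
    ∃ u ∈ s, ∀ v ∈ s, e v ≤ e u := by
  classical
  obtain ⟨u, hu⟩ := s.toFinset.exists_maximalFor e (by simpa using hne)
  simp only [MaximalFor, Multiset.mem_toFinset] at hu
  exact ⟨u, hu.1, fun v hv => (hs.total hv hu.1).elim id (hu.2 hv)⟩

/-- The greatest element of a chain is recovered from the greatest entries of the marginals. -/
theorem eq_of_isChain_of_map_eq [PartialOrder α] [Nonempty ι] (he : e.Injective) {s t : Multiset σ}
    (hs : IsChain (fun u v => e u ≤ e v) {v | v ∈ s})
    (ht : IsChain (fun u v => e u ≤ e v) {v | v ∈ t})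
    (h : ∀ c, s.map (e · c) = t.map (e · c)) : s = t := by
  induction s using Multiset.strongInductionOn generalizing t with
  | _ s ih =>
    obtain ⟨c₀⟩ := ‹Nonempty ι›
    rcases eq_or_ne s 0 with rfl | hs₀
    · exact (Multiset.map_eq_zero.1 (h c₀).symm).symm
    have ht₀ : t ≠ 0 := fun ht₀ => hs₀ (Multiset.map_eq_zero.1 ((h c₀).trans (by rw [ht₀]; rfl)))
    have hle : ∀ {s t : Multiset σ} {u u' : σ}, (∀ c, s.map (e · c) = t.map (e · c)) → u ∈ s →
        (∀ v ∈ t, e v ≤ e u') → e u ≤ e u' := by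
      intro s t u u' h hu hu' c
      obtain ⟨v, hv, hvc⟩ := Multiset.mem_map.1 (h c ▸ Multiset.mem_map_of_mem (e · c) hu)
      exact hvc ▸ hu' v hv c
    obtain ⟨u, hu, hmax⟩ := exists_mem_forall_mem_le_of_isChain hs hs₀
    obtain ⟨u', hu', hmax'⟩ := exists_mem_forall_mem_le_of_isChain ht ht₀
    obtain rfl : u = u' := he (le_antisymm (hle h hu hmax') (hle (fun c => (h c).symm) hu' hmax))
    obtain ⟨s, rfl⟩ := Multiset.exists_cons_of_mem hu
    obtain ⟨t, rfl⟩ := Multiset.exists_cons_of_mem hu'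
    rw [ih s (Multiset.lt_cons_self s u) (hs.mono fun v => Multiset.mem_cons_of_mem)
      (ht.mono fun v => Multiset.mem_cons_of_mem) fun c => by simpa using h c]

/-- The exponent of the product over `c` of the variables `(c, e v c)`. -/
def coordExponent [Fintype ι] (e : σ → ι → α) (v : σ) : ι × α →₀ ℕ :=
  ∑ c, Finsupp.single (c, e v c) 1

theorem monomial_coordExponent {R : Type*} [Fintype ι] [CommRing R] (e : σ → ι → α)
    (v : σ) (r : R) : MvPolynomial.monomial (coordExponent e v) r =
      MvPolynomial.C r * ∏ c, MvPolynomial.X (c, e v c) := by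
  simp only [coordExponent, MvPolynomial.X, ← MvPolynomial.monomial_sum_one,
    MvPolynomial.C_mul_monomial, mul_one]

theorem weight_coordExponent_apply [Fintype ι] [DecidableEq α] (m : σ →₀ ℕ) (c : ι) (i : α) :
    Finsupp.weight (coordExponent e) m (c, i) = ((Finsupp.toMultiset m).map (e · c)).count i := by
  classical
  induction m using Finsupp.induction_linear with
  | zero => simp
  | add m m' ih ih' =>
    simp only [map_add, Finsupp.add_apply, ih, ih', Multiset.map_add, Multiset.count_add]
  | single v k =>
    simp [coordExponent, Finsupp.weight_single, Finsupp.single_apply,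
      Finsupp.toMultiset_single, Multiset.nsmul_singleton, Multiset.count_replicate, ite_and]

theorem injOn_weight_coordExponent [Fintype ι] [Nonempty ι] [PartialOrder α] (he : e.Injective) :
    {m : σ →₀ ℕ | IsChain (fun u v => e u ≤ e v) (m.support : Set σ)}.InjOn
      (Finsupp.weight (coordExponent e)) := by
  classical
  intro m hm m' hm' h
  have hset : ∀ m : σ →₀ ℕ, {v | v ∈ Finsupp.toMultiset m} = (m.support : Set σ) := fun m => by
    ext v
    exact Finsupp.mem_toMultiset m v
  refine Finsupp.orderIsoMultiset.injective <| eq_of_isChain_of_map_eq he ((hset m).symm ▸ hm)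
    ((hset m').symm ▸ hm') fun c => Multiset.ext.2 fun i => ?_
  rw [Finsupp.coe_orderIsoMultiset, ← weight_coordExponent_apply, ← weight_coordExponent_apply, h]

end Chains

section IntegrallyClosed

theorem pow_dvd_of_pow_dvd_pow_mul {A : Type*} [CommMonoidWithZero A] [IsCancelMulZero A] {x y : A}
    (hx : x ≠ 0) (hxy : ∀ a, x ∣ y * a → x ∣ a) (n m : ℕ) {a : A} (h : x ^ n ∣ y ^ m * a) :
    x ^ n ∣ a := by
  have hone : ∀ (m : ℕ) {a : A}, x ∣ y ^ m * a → x ∣ a := by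
    intro m
    induction m with
    | zero => intro a h; simpa using h
    | succ m ih => exact fun {a} h => ih (hxy _ (by rwa [← mul_assoc, ← pow_succ']))
  induction n generalizing a with
  | zero => simp
  | succ n ih =>
    obtain ⟨b, rfl⟩ := hone m ((dvd_pow_self x n.succ_ne_zero).trans h)
    rw [pow_succ'] at h ⊢
    rw [mul_left_comm] at h
    exact mul_dvd_mul_left x (ih ((mul_dvd_mul_iff_left hx).1 h))

theorem isIntegrallyClosed_of_away_of_away {A : Type*} [CommRing A] [IsDomain A] {x y : A}
    (hx : x ≠ 0) (hy : y ≠ 0) (hxy : ∀ a, x ∣ y * a → x ∣ a)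
    [IsIntegrallyClosed (Localization.Away x)] [IsIntegrallyClosed (Localization.Away y)] :
    IsIntegrallyClosed A := by
  let S : Bool → Submonoid A := fun i => Submonoid.powers (cond i x y)
  have hS : ∀ i, S i ≤ nonZeroDivisors A := by
    rintro (_ | _)
    exacts [powers_le_nonZeroDivisors_of_noZeroDivisors hy,
      powers_le_nonZeroDivisors_of_noZeroDivisors hx]
  refine IsIntegrallyClosed.of_localization_submonoid S hS (by rintro (_ | _) <;> assumption) ?_
  refine eq_bot_iff.2 fun z hz => ?_
  simp only [← Localization.subalgebra.ofField_eq, Algebra.mem_iInf, Bool.forall_bool] at hz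
  obtain ⟨⟨b, _, ⟨m, rfl⟩, hb⟩, ⟨a, _, ⟨n, rfl⟩, ha⟩⟩ := hz
  simp only [cond_true, cond_false] at ha hb
  have hinj := IsFractionRing.injective A (FractionRing A)
  have hne : ∀ {s : A}, s ≠ 0 → algebraMap A (FractionRing A) s ≠ 0 := (map_ne_zero_iff _ hinj).2
  have hab : y ^ m * a = x ^ n * b := by
    apply hinj
    have := ha.symm.trans hb
    rwa [mul_inv_eq_iff_eq_mul₀ (hne (pow_ne_zero n hx)), mul_right_comm,
      eq_mul_inv_iff_mul_eq₀ (hne (pow_ne_zero m hy)), ← map_mul, ← map_mul, mul_comm a,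
      mul_comm b] at this
  obtain ⟨c, rfl⟩ := pow_dvd_of_pow_dvd_pow_mul hx hxy n m ⟨b, hab⟩
  refine Algebra.mem_bot.2 ⟨c, ?_⟩
  rw [ha, map_mul, mul_right_comm, mul_inv_cancel₀ (hne (pow_ne_zero n hx)), one_mul]

theorem isIntegrallyClosed_mvPolynomial (σ R : Type*) [Finite σ] [CommRing R] [IsDomain R]
    [IsIntegrallyClosed R] : IsIntegrallyClosed (MvPolynomial σ R) := by
  obtain ⟨n, ⟨e⟩⟩ := Finite.exists_equiv_fin σ
  suffices IsIntegrallyClosed (MvPolynomial (Fin n) R) from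
    .of_equiv (MvPolynomial.renameEquiv R e).symm.toRingEquiv
  clear e
  induction n with
  | zero => exact .of_equiv (MvPolynomial.isEmptyRingEquiv R (Fin 0)).symm
  | succ n ih => exact .of_equiv (MvPolynomial.finSuccEquiv R n).symm.toRingEquiv

theorem isIntegrallyClosed_of_leftInverse {A B : Type*} [CommRing A] [IsDomain A] [CommRing B]
    [IsDomain B] [IsIntegrallyClosed B] {i : A →+* B} {r : B →+* A}
    (hr : Function.LeftInverse r i) : IsIntegrallyClosed A := by
  refine (isIntegrallyClosed_iff (FractionRing A)).2 fun {z} hz => ?_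
  obtain ⟨p, q, hq, rfl⟩ := IsFractionRing.div_surjective (A := A) z
  have hq₀ : q ≠ 0 := nonZeroDivisors.ne_zero hq
  let j : FractionRing A →+* FractionRing B := IsFractionRing.map hr.injective
  have hj : ∀ a, j (algebraMap A _ a) = algebraMap B _ (i a) := IsLocalization.map_eq _
  obtain ⟨b, hb⟩ := IsIntegrallyClosed.isIntegral_iff.1
    (hz.map_of_comp_eq i j (RingHom.ext fun a => (hj a).symm))
  have hbq : b * i q = i p := by
    apply IsFractionRing.injective B (FractionRing B)
    rw [map_mul, hb, map_div₀, hj, hj, div_mul_cancel₀]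
    exact (map_ne_zero_iff _ (IsFractionRing.injective B (FractionRing B))).2
      ((map_ne_zero_iff _ hr.injective).2 hq₀)
  have hrb : r b * q = p := by rw [← hr q, ← map_mul, hbq, hr]
  refine ⟨r b, ?_⟩
  rw [eq_div_iff ((map_ne_zero_iff _ (IsFractionRing.injective A (FractionRing A))).2 hq₀),
    ← map_mul, hrb]

theorem isNormalRing_of_leftInverse {A B : Type*} [CommRing A] [CommRing B] {i : A →+* B}
    {r : B →+* A} (hr : Function.LeftInverse r i) (hB : IsNormalRing B) : IsNormalRing A := by
  intro P _
  have hP : P = (P.comap r).comap i := by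
    ext a
    rw [Ideal.mem_comap, Ideal.mem_comap, hr]
  obtain ⟨_, _⟩ := hB (P.comap r)
  have hloc : Function.LeftInverse (Localization.localRingHom (P.comap r) P r rfl)
      (Localization.localRingHom P (P.comap r) i hP) := by
    refine RingHom.congr_fun (f := (Localization.localRingHom (P.comap r) P r rfl).comp
      (Localization.localRingHom P (P.comap r) i hP)) (g := RingHom.id _) ?_
    refine IsLocalization.ringHom_ext P.primeCompl (RingHom.ext fun a => ?_)
    simp only [RingHom.comp_apply, Localization.localRingHom_to_map, RingHom.id_apply, hr a]
  have := hloc.injective.isDomain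
  exact ⟨this, isIntegrallyClosed_of_leftInverse hloc⟩

theorem isDomain_and_isIntegrallyClosed_atPrime_of_isLocalization {S S' : Type*} [CommRing S]
    [CommRing S'] [Algebra S S'] (M : Submonoid S) [IsLocalization M S'] [IsDomain S']
    [IsIntegrallyClosed S'] {Q : Ideal S} [Q.IsPrime] (hM : M ≤ Q.primeCompl) :
    IsDomain (Localization.AtPrime Q) ∧ IsIntegrallyClosed (Localization.AtPrime Q) := by
  let g : S' →+* Localization.AtPrime Q := IsLocalization.lift (M := M)
    (g := algebraMap S (Localization.AtPrime Q))
    fun y => IsLocalization.map_units _ (⟨y, hM y.2⟩ : Q.primeCompl)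
  let _ : Algebra S' (Localization.AtPrime Q) := g.toAlgebra
  have : IsScalarTower S S' (Localization.AtPrime Q) :=
    .of_algebraMap_eq fun s => (IsLocalization.lift_eq _ s).symm
  have := IsLocalization.isLocalization_of_submonoid_le S' (Localization.AtPrime Q) M _ hM
  have hle : Q.primeCompl.map (algebraMap S S') ≤ nonZeroDivisors S' := by
    refine le_nonZeroDivisors_of_noZeroDivisors ?_
    rintro ⟨s, hs, hs₀⟩
    obtain ⟨⟨m, hm⟩, hms⟩ := (IsLocalization.map_eq_zero_iff M S' s).1 hs₀
    exact Q.primeCompl.mul_mem (hM hm) hs (hms ▸ Q.zero_mem)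
  exact ⟨IsLocalization.isDomain_of_le_nonZeroDivisors _ hle,
    isIntegrallyClosed_of_isLocalization _ _ hle⟩

end IntegrallyClosed

section Ideal

variable {R : Type u} [CommRing R] {f : ℕ}

theorem xvt_of_lt {i j : Fin f} (h : i < j) :
    xvt R f i j = MvPolynomial.X (Sum.inl ⟨(i, j), h⟩) := dif_pos h

theorem xvt_self (i : Fin f) : xvt R f i i = 0 := by
  simp only [xvt, lt_irrefl, dite_false]

theorem xvt_swap (i j : Fin f) : xvt R f j i = -xvt R f i j := by
  rcases lt_trichotomy i j with h | rfl | h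
  · rw [xvt, dif_neg h.asymm, dif_pos h, xvt_of_lt h]
  · rw [xvt_self, neg_zero]
  · rw [xvt_of_lt h, xvt, dif_neg h.asymm, dif_pos h, neg_neg]

theorem tX_mem_Jt (j : Fin f) : tX R f j ∈ Jt R f :=
  Ideal.mem_sup_right (Ideal.subset_span ⟨j, rfl⟩)

theorem pf4t_swap₁₂ (i j k l : Fin f) : pf4t R f j i k l = -pf4t R f i j k l := by
  unfold pf4t; rw [xvt_swap i j]; ring

theorem pf4t_swap₂₃ (i j k l : Fin f) : pf4t R f i k j l = -pf4t R f i j k l := by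
  unfold pf4t; rw [xvt_swap j k]; ring

theorem pf4t_swap₃₄ (i j k l : Fin f) : pf4t R f i j l k = -pf4t R f i j k l := by
  unfold pf4t; rw [xvt_swap k l]; ring

theorem pf4t_self₁₂ (i k l : Fin f) : pf4t R f i i k l = 0 := by
  unfold pf4t; rw [xvt_self]; ring

theorem pf4t_self₂₃ (i j l : Fin f) : pf4t R f i j j l = 0 := by
  unfold pf4t; rw [xvt_self]; ring

theorem pf4t_self₃₄ (i j k : Fin f) : pf4t R f i j k k = 0 := by
  unfold pf4t; rw [xvt_self]; ring

theorem pf4t_mem_Jt_of_le {i j k l : Fin f} (hij : i ≤ j) (hjk : j ≤ k) (hkl : k ≤ l) :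
    pf4t R f i j k l ∈ Jt R f := by
  rcases hij.lt_or_eq with hij | rfl
  · rcases hjk.lt_or_eq with hjk | rfl
    · rcases hkl.lt_or_eq with hkl | rfl
      · exact Ideal.mem_sup_left (Ideal.subset_span ⟨i, j, k, l, hij, hjk, hkl, rfl⟩)
      · exact pf4t_self₃₄ (R := R) i j k ▸ (Jt R f).zero_mem
    · exact pf4t_self₂₃ (R := R) i j l ▸ (Jt R f).zero_mem
  · exact pf4t_self₁₂ (R := R) i k l ▸ (Jt R f).zero_mem

/-- Adjacent transpositions sort a tuple. -/
theorem of_forall_monotone_of_swap {n : ℕ} {α : Type*} [LinearOrder α]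
    {P : (Fin (n + 1) → α) → Prop} (hmono : ∀ v, Monotone v → P v)
    (hswap : ∀ v (i : Fin n), P (v ∘ Equiv.swap i.castSucc i.succ) → P v)
    (v : Fin (n + 1) → α) : P v := by
  suffices hperm : ∀ (σ : Equiv.Perm (Fin (n + 1))) v, P (v ∘ σ) → P v from
    hperm (Tuple.sort v) v (hmono _ (Tuple.monotone_sort v))
  intro σ
  have hσ : σ ∈ Submonoid.closure (Set.range fun i : Fin n => Equiv.swap i.castSucc i.succ) := by
    rw [Equiv.Perm.mclosure_swap_castSucc_succ]
    exact Submonoid.mem_top σ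
  induction hσ using Submonoid.closure_induction with
  | mem _ h =>
    obtain ⟨i, rfl⟩ := h
    exact fun v => hswap v i
  | one => exact fun v => id
  | mul σ τ _ _ hσ hτ => exact fun v h => hσ v (hτ (v ∘ σ) h)

theorem pf4t_mem_Jt (i j k l : Fin f) : pf4t R f i j k l ∈ Jt R f := by
  refine of_forall_monotone_of_swap (n := 3)
    (P := fun v : Fin 4 → Fin f => pf4t R f (v 0) (v 1) (v 2) (v 3) ∈ Jt R f)
    (fun v hv => pf4t_mem_Jt_of_le (hv (by decide)) (hv (by decide)) (hv (by decide)))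
    ?_ ![i, j, k, l]
  intro v n h
  rw [← neg_mem_iff]
  fin_cases n
  · exact pf4t_swap₁₂ (R := R) (v 0) (v 1) (v 2) (v 3) ▸ h
  · exact pf4t_swap₂₃ (R := R) (v 0) (v 1) (v 2) (v 3) ▸ h
  · exact pf4t_swap₃₄ (R := R) (v 0) (v 1) (v 2) (v 3) ▸ h

theorem Jt_le_iff {I : Ideal (MvPolynomial (Var f) R)} :
    Jt R f ≤ I ↔ (∀ i j k l, pf4t R f i j k l ∈ I) ∧ ∀ j, tX R f j ∈ I := by
  refine ⟨fun h => ⟨fun i j k l => h (pf4t_mem_Jt i j k l), fun j => h (tX_mem_Jt j)⟩, ?_⟩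
  rintro ⟨hpf, htX⟩
  refine sup_le (Ideal.span_le.2 ?_) (Ideal.span_le.2 ?_)
  · rintro _ ⟨i, j, k, l, -, -, -, rfl⟩
    exact hpf i j k l
  · rintro _ ⟨j, rfl⟩
    exact htX j

variable {R' : Type v} [CommRing R'] (g : R →+* R')

theorem map_xvt (i j : Fin f) : MvPolynomial.map g (xvt R f i j) = xvt R' f i j := by
  unfold xvt
  split_ifs <;> simp

theorem map_pf4t (i j k l : Fin f) : MvPolynomial.map g (pf4t R f i j k l) = pf4t R' f i j k l := by
  simp only [pf4t, map_add, map_sub, map_mul, map_xvt]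

theorem map_tX (j : Fin f) : MvPolynomial.map g (tX R f j) = tX R' f j := by
  simp only [tX, tvt, map_sum, map_mul, MvPolynomial.map_X, map_xvt]

theorem map_Jt : (Jt R f).map (MvPolynomial.map g) = Jt R' f := by
  refine le_antisymm (Ideal.map_le_iff_le_comap.2 (Jt_le_iff.2 ⟨fun i j k l => ?_, fun j => ?_⟩))
    (Jt_le_iff.2 ⟨fun i j k l => ?_, fun j => ?_⟩)
  · rw [Ideal.mem_comap, map_pf4t]
    exact pf4t_mem_Jt i j k l
  · rw [Ideal.mem_comap, map_tX]
    exact tX_mem_Jt j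
  · rw [← map_pf4t g]
    exact Ideal.mem_map_of_mem _ (pf4t_mem_Jt i j k l)
  · rw [← map_tX g]
    exact Ideal.mem_map_of_mem _ (tX_mem_Jt j)

end Ideal

section Quotient

/-- The ring `𝓡/J`. -/
abbrev JtQuotient (R : Type u) [CommRing R] (f : ℕ) : Type u := MvPolynomial (Var f) R ⧸ Jt R f

variable (R : Type u) [CommRing R] {f : ℕ}

/-- The class of `x_{i,j}` in `𝓡/J`. -/
def xbar (i j : Fin f) : JtQuotient R f := Ideal.Quotient.mk (Jt R f) (xvt R f i j)

/-- The class of `t_i` in `𝓡/J`. -/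
def tbar (i : Fin f) : JtQuotient R f := Ideal.Quotient.mk (Jt R f) (tvt R f i)

theorem xbar_self (i : Fin f) : xbar R i i = 0 := by
  rw [xbar, xvt_self, map_zero]

theorem xbar_swap (i j : Fin f) : xbar R j i = -xbar R i j := by
  rw [xbar, xvt_swap, map_neg, xbar]

theorem pfaffian_xbar (i j k l : Fin f) :
    xbar R i j * xbar R k l - xbar R i k * xbar R j l + xbar R i l * xbar R j k = 0 := by
  simpa only [xbar, pf4t, map_add, map_sub, map_mul] using
    Ideal.Quotient.eq_zero_iff_mem.2 (pf4t_mem_Jt (R := R) i j k l)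

theorem sum_tbar_mul_xbar (j : Fin f) : ∑ i, tbar R i * xbar R i j = 0 := by
  simpa only [xbar, tbar, tX, map_sum, map_mul] using
    Ideal.Quotient.eq_zero_iff_mem.2 (tX_mem_Jt (R := R) j)

/-- The augmentation `𝓡/J → R₀`, sending all variables to zero. -/
def augmentation (f : ℕ) : JtQuotient R f →+* R :=
  Ideal.Quotient.lift (Jt R f) MvPolynomial.constantCoeff fun _ ha => by
    have hx : ∀ i j, MvPolynomial.constantCoeff (xvt R f i j) = 0 := fun i j => by
      unfold xvt
      split_ifs <;> simp
    refine (Jt_le_iff (I := RingHom.ker MvPolynomial.constantCoeff)).2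
      ⟨fun i j k l => ?_, fun j => ?_⟩ ha
    · simp [RingHom.mem_ker, pf4t, hx]
    · simp [RingHom.mem_ker, tX, hx]

theorem leftInverse_augmentation (f : ℕ) :
    Function.LeftInverse (augmentation R f) (algebraMap R (JtQuotient R f)) :=
  MvPolynomial.constantCoeff_C (Var f)

end Quotient

section GeneralPoint

open MvPolynomial

variable {R : Type u} [CommRing R] {f : ℕ} {L : Type v} [CommRing L] [Algebra R L]

/-- The `2 × 2` minors of the matrix with rows `a` and `b`. -/
def minor {ι : Type*} (a b : ι → L) (i j : ι) : L := a i * b j - a j * b i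

theorem minor_swap {ι L : Type*} [CommRing L] (a b : ι → L) (i j : ι) :
    minor a b j i = -minor a b i j :=
  (neg_sub _ _).symm

/-- A vector in the kernel of the alternating matrix `minor a b`: the sum over `k` of `s k` times
the solution of Cramer's rule supported on `{p, q, k}`. -/
def minorKernel {ι : Type*} [Fintype ι] [DecidableEq ι] (p q : ι) (a b s : ι → L) (i : ι) : L :=
  minor a b p q * s i + (if i = p then ∑ k, s k * minor a b q k else 0) +
    if i = q then ∑ k, s k * minor a b k p else 0

theorem sum_minorKernel_mul_minor {ι : Type*} [Fintype ι] [DecidableEq ι] (p q : ι) (a b s : ι → L)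
    (j : ι) : ∑ i, minorKernel p q a b s i * minor a b i j = 0 := by
  simp only [minorKernel, add_mul, Finset.sum_add_distrib, ite_mul, zero_mul, Finset.sum_ite_eq',
    Finset.mem_univ, if_true, Finset.sum_mul]
  rw [← Finset.sum_add_distrib, ← Finset.sum_add_distrib]
  refine Finset.sum_eq_zero fun k _ => ?_
  unfold minor
  ring

theorem map_minorKernel {ι K : Type*} [Fintype ι] [DecidableEq ι] [CommRing K] (g : K →+* L)
    (p q : ι) (a b s : ι → K) (i : ι) :
    g (minorKernel p q a b s i) =
      minorKernel p q (fun k => g (a k)) (fun k => g (b k)) (fun k => g (s k)) i := by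
  simp only [minorKernel, minor, map_add, map_mul, map_sub, map_sum, apply_ite g, map_zero]

variable (R) in
/-- The point of `𝓡/J` with alternating matrix `c • minor a b` and with row vector
`minorKernel p q a b s`. -/
def generalPoint (p q : Fin f) (c : L) (a b s : Fin f → L) : MvPolynomial (Var f) R →ₐ[R] L :=
  aeval (Sum.elim (fun v => c * minor a b v.1.1 v.1.2) (minorKernel p q a b s))

variable (p q : Fin f) (c : L) (a b s : Fin f → L)

theorem generalPoint_xvt (i j : Fin f) :
    generalPoint R p q c a b s (xvt R f i j) = c * minor a b i j := by
  unfold generalPoint xvt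
  split_ifs with hij hji
  · rw [aeval_X, Sum.elim_inl]
  · rw [map_neg, aeval_X, Sum.elim_inl, minor, minor]
    ring
  · obtain rfl : i = j := le_antisymm (not_lt.1 hji) (not_lt.1 hij)
    rw [map_zero, minor, sub_self, mul_zero]

theorem generalPoint_tvt (i : Fin f) :
    generalPoint R p q c a b s (tvt R f i) = minorKernel p q a b s i := by
  rw [generalPoint, tvt, aeval_X, Sum.elim_inr]

theorem Jt_le_ker_generalPoint : Jt R f ≤ RingHom.ker (generalPoint R p q c a b s) := by
  refine Jt_le_iff.2 ⟨fun i j k l => ?_, fun j => ?_⟩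
  · simp only [RingHom.mem_ker, pf4t, map_add, map_sub, map_mul, generalPoint_xvt, minor]
    ring
  · simp only [RingHom.mem_ker, tX, map_sum, map_mul, generalPoint_xvt, generalPoint_tvt,
      mul_left_comm _ c, ← Finset.mul_sum, sum_minorKernel_mul_minor, mul_zero]

end GeneralPoint

section Straightening

open MvPolynomial

variable (R : Type u) [CommRing R] (n : ℕ)

/-- An embedding of the variables into a product of three chains. The standard monomials of `𝓡/J`
are the chains of the induced partial order: `x_{i,l}` and `x_{j,k}` are incomparable for
`i < j < k < l`, `t_1` is incomparable to `x_{0,1}`, and `t_0` to all the `x_{0,j}`. -/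
def varCoord : Var (n + 3) → Fin 3 → ℕ
  | Sum.inl v => ![v.1.1, v.1.2, n + 3]
  | Sum.inr k => ![if k.1 = 0 then 1 else 0, if k.1 < 2 then 2 else 1, min n (n + 2 - k)]

theorem varCoord_inl_le_inl {u v : P2 (n + 3)} :
    varCoord n (Sum.inl u) ≤ varCoord n (Sum.inl v) ↔ u.1.1 ≤ v.1.1 ∧ u.1.2 ≤ v.1.2 := by
  simp [varCoord, Pi.le_def, Fin.forall_fin_succ]

theorem varCoord_inr_le_inl {k : Fin (n + 3)} {v : P2 (n + 3)} :
    varCoord n (Sum.inr k) ≤ varCoord n (Sum.inl v) ↔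
      (k.1 = 0 → 1 ≤ v.1.1.1) ∧ (k.1 < 2 → 2 ≤ v.1.2.1) := by
  obtain ⟨⟨i, j⟩, hij⟩ := v
  have hij' : i.1 < j.1 := hij
  simp only [varCoord, Pi.le_def, Fin.forall_fin_succ]
  split_ifs <;> simp [*] <;> omega

theorem varCoord_inr_le_inr {k k' : Fin (n + 3)} :
    varCoord n (Sum.inr k) ≤ varCoord n (Sum.inr k') ↔ k' ≤ k := by
  simp only [varCoord, Pi.le_def, Fin.forall_fin_succ, Fin.le_def]
  split_ifs <;> simp <;> omega

theorem varCoord_injective : (varCoord n).Injective := by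
  intro u v h
  have h₀ := congr_fun h 0
  have h₁ := congr_fun h 1
  have h₂ := congr_fun h 2
  rcases u with ⟨⟨i, j⟩, hij⟩ | k <;> rcases v with ⟨⟨i', j'⟩, hij'⟩ | k' <;>
    simp only [varCoord, Matrix.cons_val] at h₀ h₁ h₂
  · obtain rfl := Fin.ext h₀
    obtain rfl := Fin.ext h₁
    rfl
  · omega
  · omega
  · exact congr_arg Sum.inr (Fin.ext (by split_ifs at h₀ h₁ <;> omega))

theorem varCoord_le_or_le {u : P2 (n + 3)} (hu₁ : n ≤ u.1.1.1) (hu₁' : 1 ≤ u.1.1.1)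
    (hu₂ : u.1.2.1 = n + 2) (v : Var (n + 3)) :
    varCoord n (Sum.inl u) ≤ varCoord n v ∨ varCoord n v ≤ varCoord n (Sum.inl u) := by
  obtain ⟨⟨⟨i, hi⟩, ⟨j, hj⟩⟩, hij⟩ | k := v
  · simp only [varCoord_inl_le_inl, Fin.le_def, Fin.mk_lt_mk] at hij ⊢
    omega
  · rw [varCoord_inr_le_inl]
    omega

/-- A weight that is lowered by every straightening relation. -/
def straightWeight (f : ℕ) : Var f → ℕ
  | Sum.inl v => (v.1.2.1 - v.1.1.1) ^ 2
  | Sum.inr k => (2 - k) * f ^ 2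

variable {f : ℕ}

theorem X_mul_X_mem_of_nested {i j k l : Fin f} (hij : i < j) (hjk : j < k) (hkl : k < l) :
    X (Sum.inl ⟨(i, l), hij.trans (hjk.trans hkl)⟩) * X (Sum.inl ⟨(j, k), hjk⟩) ∈
      (Jt R f).restrictScalars R ⊔ lightQuadrics R (straightWeight f)
        ((l.1 - i.1) ^ 2 + (k.1 - j.1) ^ 2) := by
  have hpf : X (Sum.inl ⟨(i, l), hij.trans (hjk.trans hkl)⟩) * X (Sum.inl ⟨(j, k), hjk⟩) =
      pf4t R f i j k l + (X (Sum.inl ⟨(i, k), hij.trans hjk⟩) * X (Sum.inl ⟨(j, l), hjk.trans hkl⟩)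
        - X (Sum.inl ⟨(i, j), hij⟩) * X (Sum.inl ⟨(k, l), hkl⟩)) := by
    rw [pf4t, xvt_of_lt hij, xvt_of_lt hkl, xvt_of_lt (hij.trans hjk), xvt_of_lt (hjk.trans hkl),
      xvt_of_lt hjk, xvt_of_lt (hij.trans (hjk.trans hkl))]
    ring
  rw [hpf]
  obtain ⟨x, hx⟩ := Nat.exists_eq_add_of_lt (Fin.lt_def.1 hij)
  obtain ⟨y, hy⟩ := Nat.exists_eq_add_of_lt (Fin.lt_def.1 hjk)
  obtain ⟨z, hz⟩ := Nat.exists_eq_add_of_lt (Fin.lt_def.1 hkl)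
  have hil : l.1 - i.1 = x + y + z + 3 := by omega
  have hjk' : k.1 - j.1 = y + 1 := by omega
  have hik : k.1 - i.1 = x + y + 2 := by omega
  have hjl : l.1 - j.1 = y + z + 2 := by omega
  have hij' : j.1 - i.1 = x + 1 := by omega
  have hkl' : l.1 - k.1 = z + 1 := by omega
  refine Submodule.add_mem_sup (pf4t_mem_Jt i j k l) (Submodule.sub_mem _ ?_ ?_) <;>
    refine Submodule.subset_span ⟨_, _, ?_, rfl⟩ <;> simp only [straightWeight]
  · rw [hil, hjk', hik, hjl]
    nlinarith
  · rw [hil, hjk', hij', hkl']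
    nlinarith

theorem tvt_mul_xvt_mem_lightQuadrics {B : ℕ} {k j : Fin f}
    (h : k ≠ j → (2 - k.1) * f ^ 2 + f ^ 2 ≤ B) :
    tvt R f k * xvt R f k j ∈ lightQuadrics R (straightWeight f) B := by
  have hsq : ∀ d < f, d ^ 2 < f ^ 2 := fun d hd => Nat.pow_lt_pow_left hd two_ne_zero
  rcases lt_trichotomy k j with hkj | rfl | hjk
  · rw [xvt_of_lt hkj]
    have := h hkj.ne
    have := hsq (j.1 - k.1) (by omega)
    exact Submodule.subset_span ⟨_, _, by simp only [straightWeight]; omega, rfl⟩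
  · rw [xvt_self, mul_zero]
    exact Submodule.zero_mem _
  · rw [xvt_swap j k, xvt_of_lt hjk, mul_neg]
    have := h hjk.ne'
    have := hsq (k.1 - j.1) (by omega)
    exact Submodule.neg_mem _
      (Submodule.subset_span ⟨_, _, by simp only [straightWeight]; omega, rfl⟩)

theorem tvt_mul_xvt_mem {B : ℕ} {i j : Fin f} (hi : i.1 < 2) (hB : (2 - i.1) * f ^ 2 ≤ B)
    (h : ∀ k, k ≠ i → k ≠ j → i < k) :
    tvt R f i * xvt R f i j ∈
      (Jt R f).restrictScalars R ⊔ lightQuadrics R (straightWeight f) B := by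
  have hcol : tvt R f i * xvt R f i j =
      tX R f j + -∑ k ∈ Finset.univ.erase i, tvt R f k * xvt R f k j := by
    rw [tX, ← Finset.add_sum_erase _ _ (Finset.mem_univ i), add_neg_cancel_right]
  rw [hcol]
  refine Submodule.add_mem_sup (tX_mem_Jt j) (Submodule.neg_mem _ (Submodule.sum_mem _ fun k hk =>
    tvt_mul_xvt_mem_lightQuadrics R fun hkj => le_trans ?_ hB))
  have hik : i.1 < k.1 := h k (Finset.ne_of_mem_erase hk) hkj
  calc (2 - k.1) * f ^ 2 + f ^ 2 = (2 - k.1 + 1) * f ^ 2 := by ring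
    _ ≤ (2 - i.1) * f ^ 2 := Nat.mul_le_mul_right _ (by omega)

theorem X_inr_mul_X_inl_mem {k i j : Fin (n + 3)} (hij : i < j)
    (h : ¬varCoord n (Sum.inr k) ≤ varCoord n (Sum.inl ⟨(i, j), hij⟩)) :
    X (Sum.inr k) * X (Sum.inl ⟨(i, j), hij⟩) ∈ (Jt R (n + 3)).restrictScalars R ⊔
      lightQuadrics R (straightWeight (n + 3)) ((2 - k.1) * (n + 3) ^ 2 + (j.1 - i.1) ^ 2) := by
  rw [varCoord_inr_le_inl] at h
  dsimp only at h
  have hij' : i.1 < j.1 := hij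
  have hk : k.1 < 2 := by omega
  have hik : i = k ∨ j = k ∧ i.1 = 0 := by
    simp only [Fin.ext_iff]
    omega
  rw [← xvt_of_lt (R := R) hij]
  rcases hik with rfl | ⟨rfl, hi⟩
  · refine tvt_mul_xvt_mem R hk (Nat.le_add_right _ _) fun k hki hkj => ?_
    simp only [ne_eq, Fin.ext_iff, Fin.lt_def] at *
    omega
  · rw [xvt_swap j i, mul_neg]
    refine Submodule.neg_mem _ (tvt_mul_xvt_mem R hk (Nat.le_add_right _ _) fun k hkj hki => ?_)
    simp only [ne_eq, Fin.ext_iff, Fin.lt_def] at *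
    omega

theorem sup_chainSpan_varCoord_eq_top : (Jt R (n + 3)).restrictScalars R ⊔
    chainSpan R (fun u v => varCoord n u ≤ varCoord n v) = ⊤ := by
  refine sup_chainSpan_eq_top (ω := straightWeight (n + 3)) fun u v _ huv hvu => ?_
  rcases u with ⟨⟨i, l⟩, hil⟩ | k <;> rcases v with ⟨⟨i', l'⟩, hil'⟩ | k'
  · rw [varCoord_inl_le_inl, not_and_or, not_le, not_le] at huv hvu
    rcases huv with hi | hl
    · rw [mul_comm, add_comm (straightWeight _ _)]
      exact X_mul_X_mem_of_nested R hi hil (hvu.resolve_left hi.asymm)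
    · exact X_mul_X_mem_of_nested R (hvu.resolve_right hl.asymm) hil' hl
  · rw [mul_comm, add_comm (straightWeight _ _)]
    exact X_inr_mul_X_inl_mem R n hil hvu
  · exact X_inr_mul_X_inl_mem R n hil' huv
  · rw [varCoord_inr_le_inr] at huv hvu
    exact absurd (le_of_not_ge huv) hvu

end Straightening

section StandardPoint

open MvPolynomial

variable (R : Type u) [CommRing R] (n : ℕ)

/-- The row `a` of `standardPoint`. -/
def rowA (i : Fin (n + 3)) : Polynomial (MvPolynomial (Fin 3 × ℕ) R) :=
  Polynomial.C (X (0, i.1)) * Polynomial.X ^ (n + 2 - i.1)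

/-- The row `b` of `standardPoint`. -/
def rowB (j : Fin (n + 3)) : Polynomial (MvPolynomial (Fin 3 × ℕ) R) :=
  Polynomial.C (X (1, j.1))

/-- The parameters `s` of `standardPoint`; `n + 2 - k` is the last entry of `varCoord` at `t_k`
for `2 ≤ k`. -/
def rowS (k : Fin (n + 3)) : Polynomial (MvPolynomial (Fin 3 × ℕ) R) :=
  if k.1 < 2 then 0 else Polynomial.C (X (2, n + 2 - k.1)) * Polynomial.X ^ (n + 2 - k.1)

/-- A point of `𝓡/J` over a polynomial ring in `T` and three families of variables. The powers of
`T` make the leading coefficient of the image of a variable the monomial given by `varCoord`. -/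
def standardPoint :
    MvPolynomial (Var (n + 3)) R →ₐ[R] Polynomial (MvPolynomial (Fin 3 × ℕ) R) :=
  generalPoint R 0 1 (Polynomial.C (X (2, n + 3)) * Polynomial.X ^ (n + 3))
    (rowA R n) (rowB R n) (rowS R n)

/-- The degree in `T` of the image of a variable under `standardPoint`. -/
def standardDegree (v : Var (n + 3)) : ℕ := n + 2 - varCoord n v 0 + varCoord n v 2

theorem Jt_le_ker_standardPoint : Jt R (n + 3) ≤ RingHom.ker (standardPoint R n) :=
  Jt_le_ker_generalPoint _ _ _ _ _ _

theorem hasTopCoeff_rowA_mul_rowB (i j : Fin (n + 3)) :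
    HasTopCoeff (rowA R n i * rowB R n j) (n + 2 - i) (X (0, i.1) * X (1, j.1)) :=
  (HasTopCoeff.C_mul_X_pow _ _).mul (.C _)

theorem hasTopCoeff_minor {i j : Fin (n + 3)} (hij : i < j) :
    HasTopCoeff (minor (rowA R n) (rowB R n) i j) (n + 2 - i) (X (0, i.1) * X (1, j.1)) := by
  have hdeg : n + 2 - j.1 < n + 2 - i.1 := by omega
  simpa only [minor, sub_zero] using
    (hasTopCoeff_rowA_mul_rowB R n i j).sub ((hasTopCoeff_rowA_mul_rowB R n j i).of_lt hdeg)

theorem hasTopCoeff_sum_rowS_mul {P : Fin (n + 3) → Polynomial (MvPolynomial (Fin 3 × ℕ) R)} {d : ℕ}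
    {c : ℕ → MvPolynomial (Fin 3 × ℕ) R} (hP : ∀ k, 2 ≤ k.1 → HasTopCoeff (P k) d (c k)) :
    HasTopCoeff (∑ k, rowS R n k * P k) (n + d) (X (2, n) * c 2) := by
  have htwo : (2 : Fin (n + 3)).1 = 2 := Fin.val_two
  refine HasTopCoeff.sum_of_forall_ne (i := 2) ?_ fun k hk₂ => ?_
  · rw [rowS, htwo, if_neg (lt_irrefl 2)]
    have h₂ := hP 2 htwo.ge
    rw [htwo] at h₂
    exact (HasTopCoeff.C_mul_X_pow _ n).mul h₂
  · by_cases hk : k.1 < 2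
    · rw [rowS, if_pos hk, zero_mul]
      exact ⟨by simp, by simp⟩
    · have hk₂' : k.1 ≠ 2 := fun h => hk₂ (Fin.ext (h.trans htwo.symm))
      rw [rowS, if_neg hk]
      exact ((HasTopCoeff.C_mul_X_pow _ _).mul (hP k (not_lt.1 hk))).of_lt (by omega)

theorem hasTopCoeff_standardPoint_xvt {i j : Fin (n + 3)} (hij : i < j) :
    HasTopCoeff (standardPoint R n (xvt R (n + 3) i j)) (n + 2 - i + (n + 3))
      (X (0, i.1) * X (1, j.1) * X (2, n + 3)) := by
  rw [standardPoint, generalPoint_xvt, mul_comm]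
  exact (hasTopCoeff_minor R n hij).mul (.C_mul_X_pow _ _)

theorem hasTopCoeff_standardPoint_tvt_of_two_le {k : Fin (n + 3)} (hk : 2 ≤ k.1) :
    HasTopCoeff (standardPoint R n (tvt R (n + 3) k)) (n + 2 + (n + 2 - k))
      (X (0, 0) * X (1, 1) * X (2, n + 2 - k.1)) := by
  have hk₀ : k ≠ 0 := by rintro rfl; simp at hk
  have hk₁ : k ≠ 1 := by rintro rfl; simp at hk
  rw [standardPoint, generalPoint_tvt, minorKernel, if_neg hk₀, if_neg hk₁, add_zero, add_zero,
    rowS, if_neg hk.not_gt]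
  exact (hasTopCoeff_minor R n Fin.zero_lt_one).mul (.C_mul_X_pow _ _)

theorem hasTopCoeff_standardPoint_tvt_zero :
    HasTopCoeff (standardPoint R n (tvt R (n + 3) 0)) (n + (n + 1))
      (X (2, n) * (X (0, 1) * X (1, 2))) := by
  rw [standardPoint, generalPoint_tvt, minorKernel, if_pos rfl, if_neg Fin.zero_ne_one, rowS,
    if_pos (by simp), mul_zero, zero_add, add_zero]
  refine hasTopCoeff_sum_rowS_mul R n (c := fun k => X (0, 1) * X (1, k)) fun k hk => ?_
  exact hasTopCoeff_minor R n (i := 1) hk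

theorem hasTopCoeff_standardPoint_tvt_one :
    HasTopCoeff (standardPoint R n (tvt R (n + 3) 1)) (n + (n + 2))
      (X (2, n) * -(X (0, 0) * X (1, 2))) := by
  rw [standardPoint, generalPoint_tvt, minorKernel, if_neg Fin.zero_ne_one.symm, if_pos rfl, rowS,
    if_pos (by simp), mul_zero, zero_add, zero_add]
  refine hasTopCoeff_sum_rowS_mul R n (c := fun k => -(X (0, 0) * X (1, k))) fun k hk => ?_
  rw [minor_swap]
  exact (hasTopCoeff_minor R n (Fin.lt_def.2 (two_pos.trans_le hk))).neg

theorem exists_hasTopCoeff_standardPoint (v : Var (n + 3)) : ∃ ε : Rˣ,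
    HasTopCoeff (standardPoint R n (X v)) (standardDegree n v)
      (monomial (coordExponent (varCoord n) v) (ε : R)) := by
  simp only [monomial_coordExponent, Fin.prod_univ_three]
  rcases v with ⟨⟨i, j⟩, hij⟩ | k
  · refine ⟨1, ?_⟩
    convert hasTopCoeff_standardPoint_xvt R n hij using 1
    · rw [xvt_of_lt hij]
    · simp [standardDegree, varCoord]
    · simp [varCoord]
  rw [← tvt]
  rcases lt_or_ge k.1 2 with hk | hk
  · obtain rfl | rfl : k = 0 ∨ k = 1 := by simp only [Fin.ext_iff, Fin.val_zero, Fin.val_one]; omega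
    · refine ⟨1, ?_⟩
      convert hasTopCoeff_standardPoint_tvt_zero R n using 1
      · simp [standardDegree, varCoord, add_comm]
      · simp [varCoord, mul_comm]
    · refine ⟨-1, ?_⟩
      convert hasTopCoeff_standardPoint_tvt_one R n using 1
      · simp [standardDegree, varCoord, add_comm]
      · simp [varCoord, mul_comm]
  · refine ⟨1, ?_⟩
    have hmin : min n (n + 2 - k.1) = n + 2 - k.1 := by omega
    have hk₀ : k ≠ 0 := by rintro rfl; simp at hk
    convert hasTopCoeff_standardPoint_tvt_of_two_le R n hk using 1
    · simp [standardDegree, varCoord, hk₀, hmin]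
    · simp [varCoord, hk.not_gt, hk₀, hmin]

theorem disjoint_ker_standardPoint_chainSpan :
    Disjoint (LinearMap.ker (standardPoint R n).toLinearMap)
      (chainSpan R (fun u v => varCoord n u ≤ varCoord n v)) :=
  disjoint_ker_restrictSupport (exists_hasTopCoeff_standardPoint R n)
    (injOn_weight_coordExponent (varCoord_injective n))

theorem ker_standardPoint : RingHom.ker (standardPoint R n) = Jt R (n + 3) :=
  ker_eq_of_disjoint_chainSpan (Jt_le_ker_standardPoint R n) (sup_chainSpan_varCoord_eq_top R n)
    (disjoint_ker_standardPoint_chainSpan R n)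

theorem isCompl_Jt_chainSpan : IsCompl ((Jt R (n + 3)).restrictScalars R)
    (chainSpan R (fun u v => varCoord n u ≤ varCoord n v)) :=
  ⟨(disjoint_ker_standardPoint_chainSpan R n).mono_left (Jt_le_ker_standardPoint R n),
    codisjoint_iff.2 (sup_chainSpan_varCoord_eq_top R n)⟩

end StandardPoint

theorem isDomain_JtQuotient (R : Type u) [CommRing R] [IsDomain R] {f : ℕ} (hf : 3 ≤ f) :
    IsDomain (JtQuotient R f) := by
  obtain ⟨n, rfl⟩ := Nat.exists_eq_add_of_le' hf
  have := RingHom.ker_isPrime (standardPoint R n)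
  exact Ideal.Quotient.isDomain_iff_prime (Jt R (n + 3)) |>.2 (ker_standardPoint R n ▸ this)

section Away

variable {R A B L : Type*} [CommRing R] [CommRing A] [CommRing B] [CommRing L] [Algebra R A]
  [Algebra R B] [Algebra R L]

/-- The extension of an algebra homomorphism to the localization away from an element that it sends
to a unit. -/
def awayLift {a : A} (φ : A →ₐ[R] L) (h : IsUnit (φ a)) : Localization.Away a →ₐ[R] L :=
  IsLocalization.liftAlgHom (M := Submonoid.powers a) (f := φ) <| by
    rintro ⟨_, n, rfl⟩
    simpa only [map_pow] using h.pow n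

theorem awayLift_algebraMap {a : A} (φ : A →ₐ[R] L) (h : IsUnit (φ a)) (x : A) :
    awayLift φ h (algebraMap A _ x) = φ x :=
  IsLocalization.lift_eq _ x

theorem awayLift_comp_eq_id {a : A} {b : B} {φ : A →ₐ[R] Localization.Away b}
    {ψ : B →ₐ[R] Localization.Away a} {hψ : IsUnit (ψ b)} (hφ : IsUnit (φ a))
    (h : ∀ x, awayLift ψ hψ (φ x) = algebraMap A _ x) :
    (awayLift ψ hψ).comp (awayLift φ hφ) = AlgHom.id R (Localization.Away a) := by
  refine AlgHom.coe_ringHom_injective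
    (IsLocalization.ringHom_ext (Submonoid.powers a) (RingHom.ext fun x => ?_))
  simpa [awayLift_algebraMap] using h x

theorem nonempty_away_equiv_away {a : A} {b : B} {φ : A →ₐ[R] Localization.Away b}
    {ψ : B →ₐ[R] Localization.Away a} (hφ : IsUnit (φ a)) (hψ : IsUnit (ψ b))
    (hψφ : ∀ x, awayLift ψ hψ (φ x) = algebraMap A _ x)
    (hφψ : ∀ y, awayLift φ hφ (ψ y) = algebraMap B _ y) :
    Nonempty (Localization.Away a ≃ₐ[R] Localization.Away b) :=
  ⟨.ofAlgHom (awayLift φ hφ) (awayLift ψ hψ) (awayLift_comp_eq_id hψ hφψ)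
    (awayLift_comp_eq_id hφ hψφ)⟩

end Away

section GeneralPointOfUnit

variable {ι L : Type*} [CommRing L] {M : ι → ι → L} {p q : ι} {y : L}

theorem mul_minor_eq (hpf : ∀ i j, M p q * M i j - M p i * M q j + M p j * M q i = 0)
    (hy : y * M p q = 1) (i j : ι) : y * minor (M p) (M q) i j = M i j := by
  unfold minor
  linear_combination M i j * hy - y * hpf i j

variable [Fintype ι]

theorem sum_indicator_mul (hpq : p ≠ q) (τ m : ι → L) :
    ∑ k, Set.indicator {p, q}ᶜ τ k * m k = ∑ k, τ k * m k - τ p * m p - τ q * m q := by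
  classical
  have hk : ∀ k, Set.indicator {p, q}ᶜ τ k * m k =
      τ k * m k - (if k = p then τ k * m k else 0) - if k = q then τ k * m k else 0 := by
    intro k
    by_cases hp : k = p <;> by_cases hq : k = q <;> simp_all
  simp only [hk, Finset.sum_sub_distrib, Finset.sum_ite_eq', Finset.mem_univ, if_true]

theorem minorKernel_eq [DecidableEq ι] (hpq : p ≠ q) (hself : ∀ i, M i i = 0)
    (hswap : ∀ i j, M j i = -M i j)
    (hpf : ∀ i j, M p q * M i j - M p i * M q j + M p j * M q i = 0) (hy : y * M p q = 1)
    {τ : ι → L} (hτ : ∀ j, ∑ i, τ i * M i j = 0) (i : ι) :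
    minorKernel p q (M p) (M q) (fun k => y ^ 2 * Set.indicator {p, q}ᶜ τ k) i = τ i := by
  have hminor : ∀ i j, minor (M p) (M q) i j = M p q * M i j := fun i j => by
    linear_combination M p q * mul_minor_eq hpf hy i j - minor (M p) (M q) i j * hy
  have hsum : ∀ j, ∑ k, y ^ 2 * Set.indicator {p, q}ᶜ τ k * (M p q * M k j) =
      -(y * (τ p * M p j + τ q * M q j)) := fun j => by
    have hfactor : ∀ k, y ^ 2 * Set.indicator {p, q}ᶜ τ k * (M p q * M k j) =
        y * (Set.indicator {p, q}ᶜ τ k * M k j) :=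
      fun k => by linear_combination y * Set.indicator {p, q}ᶜ τ k * M k j * hy
    simp only [hfactor, ← Finset.mul_sum, sum_indicator_mul hpq, hτ]
    ring
  have hsumq : ∑ k, y ^ 2 * Set.indicator {p, q}ᶜ τ k * (M p q * M q k) =
      y * (τ p * M p q + τ q * M q q) := by
    rw [← neg_inj, ← hsum q, ← Finset.sum_neg_distrib]
    exact Finset.sum_congr rfl fun k _ => by rw [hswap k q]; ring
  simp only [minorKernel, hminor, hsum, hsumq, hself]
  obtain rfl | hip := eq_or_ne i p
  · simp only [Set.mem_compl_iff, Set.mem_insert_iff, true_or, not_true, not_false_iff,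
      Set.indicator_of_notMem, if_true, if_neg hpq]
    linear_combination τ i * hy
  obtain rfl | hiq := eq_or_ne i q
  · simp only [Set.mem_compl_iff, Set.mem_insert_iff, Set.mem_singleton_iff, or_true, not_true,
      not_false_iff, Set.indicator_of_notMem, if_true, if_neg hip]
    linear_combination τ i * hy - y * τ i * hswap i p
  · rw [Set.indicator_of_mem (by simp [hip, hiq]), if_neg hip, if_neg hiq]
    linear_combination τ i * (y * M p q + 1) * hy

end GeneralPointOfUnit

section Chart

open MvPolynomial

variable {R : Type u} [CommRing R] {f : ℕ} {p q : Fin f}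

theorem JtQuotient.algHom_ext {L : Type v} [CommRing L] [Algebra R L]
    {φ ψ : JtQuotient R f →ₐ[R] L} (hx : ∀ i j, φ (xbar R i j) = ψ (xbar R i j))
    (ht : ∀ i, φ (tbar R i) = ψ (tbar R i)) : φ = ψ := by
  refine Ideal.Quotient.algHom_ext _ (MvPolynomial.algHom_ext ?_)
  rintro (⟨⟨i, j⟩, hij⟩ | i)
  · have hX : Ideal.Quotient.mk (Jt R f) (X (Sum.inl ⟨(i, j), hij⟩)) = xbar R i j := by
      rw [xbar, xvt_of_lt hij]
    simpa [hX] using hx i j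
  · exact ht i

/-- The variables `x_{p,k}`, `x_{q,k}`, `t_k` that freely generate the localization of `𝓡/J` away
from `x_{p,q}`, up to inverting `x_{p,q}`. -/
abbrev ChartVar (p q : Fin f) : Type :=
  {k // k ≠ p} ⊕ {k // k ≠ p ∧ k ≠ q} ⊕ {k // k ≠ p ∧ k ≠ q}

variable (R p q) in
/-- The polynomial subring of `𝓡/J` whose localization away from `x_{p,q}` is that of `𝓡/J`. -/
def ofChart : MvPolynomial (ChartVar p q) R →ₐ[R] JtQuotient R f :=
  aeval (Sum.elim (fun k => xbar R p k) (Sum.elim (fun k => xbar R q k) fun k => tbar R k))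

variable (R) in
/-- The variable `x_{p,q}` of the chart. -/
def chartPivot (hpq : p ≠ q) : MvPolynomial (ChartVar p q) R := X (Sum.inl ⟨q, hpq.symm⟩)

theorem ofChart_chartPivot (hpq : p ≠ q) : ofChart R p q (chartPivot R hpq) = xbar R p q := by
  rw [ofChart, chartPivot, aeval_X, Sum.elim_inl]

variable (R) in
/-- Row `p` of the alternating matrix in the chart. -/
def chartRowP (p q k : Fin f) : MvPolynomial (ChartVar p q) R :=
  if hk : k = p then 0 else X (Sum.inl ⟨k, hk⟩)

variable (R) in
/-- Row `q` of the alternating matrix in the chart. -/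
def chartRowQ (hpq : p ≠ q) (k : Fin f) : MvPolynomial (ChartVar p q) R :=
  if hk : k ≠ p ∧ k ≠ q then X (Sum.inr (Sum.inl ⟨k, hk⟩))
  else if k = p then -chartPivot R hpq else 0

variable (R) in
/-- The row vector in the chart, with the dependent entries at `p` and `q` replaced by zero. -/
def chartVector (p q k : Fin f) : MvPolynomial (ChartVar p q) R :=
  if hk : k ≠ p ∧ k ≠ q then X (Sum.inr (Sum.inr ⟨k, hk⟩)) else 0

theorem ofChart_chartRowP (k : Fin f) : ofChart R p q (chartRowP R p q k) = xbar R p k := by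
  unfold chartRowP
  split_ifs with hk
  · rw [map_zero, hk, xbar_self]
  · rw [ofChart, aeval_X, Sum.elim_inl]

theorem ofChart_chartRowQ (hpq : p ≠ q) (k : Fin f) :
    ofChart R p q (chartRowQ R hpq k) = xbar R q k := by
  unfold chartRowQ
  split_ifs with hk hkp
  · rw [ofChart, aeval_X, Sum.elim_inr, Sum.elim_inl]
  · rw [map_neg, ofChart_chartPivot, hkp, xbar_swap R q p, neg_neg]
  · obtain rfl : k = q := by tauto
    rw [map_zero, xbar_self]

theorem ofChart_chartVector (k : Fin f) :
    ofChart R p q (chartVector R p q k) = Set.indicator {p, q}ᶜ (tbar R) k := by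
  unfold chartVector
  split_ifs with hk
  · rw [ofChart, aeval_X, Sum.elim_inr, Sum.elim_inr, Set.indicator_of_mem (by simpa using hk)]
  · rw [map_zero, Set.indicator_of_notMem (by simpa using hk)]

theorem chartRowP_left : chartRowP R p q p = 0 := dif_pos rfl

theorem chartRowP_right (hpq : p ≠ q) : chartRowP R p q q = chartPivot R hpq := dif_neg hpq.symm

theorem chartRowQ_left (hpq : p ≠ q) : chartRowQ R hpq p = -chartPivot R hpq := by
  simp [chartRowQ]

theorem chartRowQ_right (hpq : p ≠ q) : chartRowQ R hpq q = 0 := by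
  simp [chartRowQ, hpq.symm]

variable (R) in
/-- The coordinates on the chart, as an algebra homomorphism out of `𝓡/J`. -/
def toChart (hpq : p ≠ q) : JtQuotient R f →ₐ[R] Localization.Away (chartPivot R hpq) :=
  let y := IsLocalization.Away.invSelf (S := Localization.Away (chartPivot R hpq))
    (chartPivot R hpq)
  Ideal.Quotient.liftₐ (Jt R f) (generalPoint R p q y
      (fun k => algebraMap _ _ (chartRowP R p q k)) (fun k => algebraMap _ _ (chartRowQ R hpq k))
      fun k => y ^ 2 * algebraMap _ _ (chartVector R p q k))
    fun _ h => Jt_le_ker_generalPoint _ _ _ _ _ _ h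

theorem toChart_xbar (hpq : p ≠ q) (i j : Fin f) :
    toChart R hpq (xbar R i j) = IsLocalization.Away.invSelf (chartPivot R hpq) *
      algebraMap _ _ (minor (chartRowP R p q) (chartRowQ R hpq) i j) := by
  simp only [minor, map_sub, map_mul]
  exact generalPoint_xvt ..

theorem toChart_tbar (hpq : p ≠ q) (i : Fin f) :
    toChart R hpq (tbar R i) = minorKernel p q
      (fun k => algebraMap _ _ (chartRowP R p q k)) (fun k => algebraMap _ _ (chartRowQ R hpq k))
      (fun k => IsLocalization.Away.invSelf (chartPivot R hpq) ^ 2 *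
        algebraMap _ _ (chartVector R p q k)) i :=
  generalPoint_tvt ..

theorem toChart_xbar_left (hpq : p ≠ q) (k : Fin f) :
    toChart R hpq (xbar R p k) = algebraMap _ _ (chartRowP R p q k) := by
  rw [toChart_xbar, minor, chartRowP_left, chartRowQ_left, zero_mul, zero_sub, mul_neg, neg_neg,
    mul_comm, map_mul, mul_assoc, IsLocalization.Away.mul_invSelf, mul_one]

theorem toChart_xbar_right (hpq : p ≠ q) (k : Fin f) :
    toChart R hpq (xbar R q k) = algebraMap _ _ (chartRowQ R hpq k) := by
  rw [toChart_xbar, minor, chartRowP_right hpq, chartRowQ_right hpq, mul_zero, sub_zero,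
    mul_comm, map_mul, mul_right_comm, IsLocalization.Away.mul_invSelf, one_mul]

theorem toChart_tbar_of_ne (hpq : p ≠ q) {k : Fin f} (hkp : k ≠ p) (hkq : k ≠ q) :
    toChart R hpq (tbar R k) = algebraMap _ _ (chartVector R p q k) := by
  have hy := IsLocalization.Away.mul_invSelf (S := Localization.Away (chartPivot R hpq))
    (chartPivot R hpq)
  rw [toChart_tbar, minorKernel, minor, if_neg hkp, if_neg hkq, chartRowP_left, chartRowP_right hpq,
    chartRowQ_left, map_zero, map_neg]
  set x := algebraMap _ (Localization.Away (chartPivot R hpq)) (chartPivot R hpq)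
  set y := IsLocalization.Away.invSelf (S := Localization.Away (chartPivot R hpq))
    (chartPivot R hpq)
  linear_combination algebraMap _ _ (chartVector R p q k) * (x * y + 1) * hy

theorem toChart_ofChart (hpq : p ≠ q) (b : MvPolynomial (ChartVar p q) R) :
    toChart R hpq (ofChart R p q b) = algebraMap _ _ b := by
  refine DFunLike.congr_fun (f := (toChart R hpq).comp (ofChart R p q))
    (g := IsScalarTower.toAlgHom R _ _) (MvPolynomial.algHom_ext ?_) b
  rintro (k | k | k)
  · simp [ofChart, toChart_xbar_left, chartRowP, k.2]
  · simp [ofChart, toChart_xbar_right, chartRowQ, k.2]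
  · simp [ofChart, toChart_tbar_of_ne hpq k.2.1 k.2.2, chartVector, k.2]

theorem comp_toChart_eq (hpq : p ≠ q) {L : Type v} [CommRing L] [Algebra R L]
    {g : Localization.Away (chartPivot R hpq) →ₐ[R] L} {α : JtQuotient R f →ₐ[R] L}
    (hg : ∀ b, g (algebraMap _ _ b) = α (ofChart R p q b)) : g.comp (toChart R hpq) = α := by
  let y := IsLocalization.Away.invSelf (S := Localization.Away (chartPivot R hpq))
    (chartPivot R hpq)
  have hy : g y * α (xbar R p q) = 1 := by
    rw [← ofChart_chartPivot hpq, ← hg, ← map_mul, mul_comm, IsLocalization.Away.mul_invSelf,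
      map_one]
  have hpf : ∀ i j, α (xbar R p q) * α (xbar R i j) - α (xbar R p i) * α (xbar R q j) +
      α (xbar R p j) * α (xbar R q i) = 0 := fun i j => by
    simpa only [map_add, map_sub, map_mul, map_zero] using congrArg α (pfaffian_xbar R p q i j)
  refine JtQuotient.algHom_ext (fun i j => ?_) fun i => ?_
  · rw [AlgHom.comp_apply, toChart_xbar, map_mul, hg]
    simp only [minor, map_sub, map_mul, ofChart_chartRowP, ofChart_chartRowQ]
    exact mul_minor_eq (M := fun i j => α (xbar R i j)) hpf hy i j
  · have hind : ∀ k, α (Set.indicator {p, q}ᶜ (tbar R) k) =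
        Set.indicator {p, q}ᶜ (fun i => α (tbar R i)) k := fun k => by
      simp only [Set.indicator_apply, apply_ite α, map_zero]
    rw [AlgHom.comp_apply, toChart_tbar, ← AlgHom.coe_toRingHom, map_minorKernel]
    simp only [AlgHom.coe_toRingHom, map_mul, map_pow, hg, ofChart_chartRowP, ofChart_chartRowQ,
      ofChart_chartVector, hind]
    refine minorKernel_eq (M := fun i j => α (xbar R i j)) hpq (fun i => ?_) (fun i j => ?_) hpf hy
      (fun j => ?_) i
    · rw [xbar_self, map_zero]
    · rw [xbar_swap, map_neg]
    · simpa only [map_sum, map_mul, map_zero] using congrArg α (sum_tbar_mul_xbar R j)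

theorem nonempty_away_xbar_equiv (hpq : p ≠ q) :
    Nonempty (Localization.Away (chartPivot R hpq) ≃ₐ[R] Localization.Away (xbar R p q)) := by
  let α : JtQuotient R f →ₐ[R] Localization.Away (xbar R p q) := IsScalarTower.toAlgHom R _ _
  let ψ := α.comp (ofChart R p q)
  have hψ : IsUnit (ψ (chartPivot R hpq)) := by
    rw [AlgHom.comp_apply, ofChart_chartPivot]
    exact IsLocalization.Away.algebraMap_isUnit _
  have hφ : IsUnit (toChart R hpq (xbar R p q)) := by
    rw [toChart_xbar_left, chartRowP_right]
    exact IsLocalization.Away.algebraMap_isUnit _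
  refine nonempty_away_equiv_away hψ hφ (fun b => ?_) fun a => ?_
  · exact (awayLift_algebraMap _ _ _).trans (toChart_ofChart hpq b)
  · exact DFunLike.congr_fun (comp_toChart_eq hpq (g := awayLift ψ hψ) (α := α)
      (awayLift_algebraMap ψ hψ)) a

theorem isIntegrallyClosed_away_xbar [IsDomain R] [IsIntegrallyClosed R] (hpq : p ≠ q) :
    IsIntegrallyClosed (Localization.Away (xbar R p q)) := by
  obtain ⟨e⟩ := nonempty_away_xbar_equiv (R := R) hpq
  have := isIntegrallyClosed_mvPolynomial (ChartVar p q) R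
  have := isIntegrallyClosed_of_isLocalization (Localization.Away (chartPivot R hpq))
    (Submonoid.powers (chartPivot R hpq)) <|
      powers_le_nonZeroDivisors_of_noZeroDivisors (X_ne_zero _)
  exact .of_equiv e.toRingEquiv

end Chart

section Quotient

variable (R : Type u) [CommRing R] [IsDomain R] [IsIntegrallyClosed R]

theorem isIntegrallyClosed_JtQuotient {f : ℕ} (hf : 4 ≤ f) :
    IsIntegrallyClosed (JtQuotient R f) := by
  obtain ⟨n, rfl⟩ := Nat.exists_eq_add_of_le' hf
  have := isDomain_JtQuotient R (f := n + 1 + 3) (by omega)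
  let i : Fin (n + 1 + 3) := ⟨n + 1, by omega⟩
  let j : Fin (n + 1 + 3) := ⟨n + 2, by omega⟩
  let k : Fin (n + 1 + 3) := ⟨n + 3, by omega⟩
  have hik : i < k := Fin.mk_lt_mk.2 (by omega)
  have hjk : j < k := Fin.mk_lt_mk.2 (by omega)
  have hJ := isCompl_Jt_chainSpan R (n + 1)
  have := isIntegrallyClosed_away_xbar (R := R) hik.ne
  have := isIntegrallyClosed_away_xbar (R := R) hjk.ne
  refine isIntegrallyClosed_of_away_of_away (x := xbar R i k) (y := xbar R j k) ?_ ?_ fun a => ?_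
  all_goals simp only [xbar, xvt_of_lt hik, xvt_of_lt hjk]
  · exact mk_X_ne_zero hJ.disjoint _
  · exact mk_X_ne_zero hJ.disjoint _
  · exact mk_X_dvd_of_dvd_mul hJ (by simp [i, j])
      (varCoord_le_or_le _ le_rfl (by simp [i]) rfl)
      (varCoord_le_or_le _ (by simp [j]) (by simp [j]) rfl)

end Quotient

section BaseChange

variable (R : Type u) [CommRing R] {f : ℕ}

attribute [local instance] MvPolynomial.algebraMvPolynomial in
theorem isNormalRing_JtQuotient (hf : 4 ≤ f) (hR : IsNormalRing R) :
    IsNormalRing (JtQuotient R f) := by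
  intro Q hQ
  let P := Q.comap (algebraMap R (JtQuotient R f))
  let R' := Localization.AtPrime P
  obtain ⟨hdomain, hclosed⟩ : IsDomain R' ∧ IsIntegrallyClosed R' := hR P
  have hmap : (Jt R f).map (algebraMap (MvPolynomial (Var f) R) (MvPolynomial (Var f) R')) =
      Jt R' f := map_Jt (algebraMap R R')
  let S' := MvPolynomial (Var f) R' ⧸
    (Jt R f).map (algebraMap (MvPolynomial (Var f) R) (MvPolynomial (Var f) R'))
  have : IsDomain S' := by
    unfold S'
    rw [hmap]
    exact isDomain_JtQuotient R' (by omega)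
  have : IsIntegrallyClosed S' := by
    unfold S'
    rw [hmap]
    exact isIntegrallyClosed_JtQuotient R' hf
  have : IsLocalization (P.primeCompl.map (MvPolynomial.C (σ := Var f)))
      (MvPolynomial (Var f) R') := MvPolynomial.isLocalization P.primeCompl R'
  refine isDomain_and_isIntegrallyClosed_atPrime_of_isLocalization (S' := S')
    (Algebra.algebraMapSubmonoid (JtQuotient R f)
      (P.primeCompl.map (MvPolynomial.C (σ := Var f)))) ?_
  rintro _ ⟨_, ⟨r, hr, rfl⟩, rfl⟩
  exact hr

end BaseChange

theorem stmt_16_general (R₀ : Type u) [CommRing R₀] (f : ℕ) (hf : 4 ≤ f) :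
    (IsDomain (MvPolynomial (Var f) R₀ ⧸ Jt R₀ f) ↔ IsDomain R₀) ∧
      (IsNormalRing (MvPolynomial (Var f) R₀ ⧸ Jt R₀ f) ↔ IsNormalRing R₀) :=
  have hretract := leftInverse_augmentation R₀ f
  ⟨⟨fun _ => hretract.injective.isDomain _, fun _ => isDomain_JtQuotient R₀ (by omega)⟩,
    isNormalRing_of_leftInverse hretract, isNormalRing_JtQuotient R₀ hf⟩

/-- for an arbitrary Noetherian ring `R₀` and `f ≥ 4`, with
`J = Pf₄(X) + I₁(tX)` in `𝓡 = R₀[x_{i,j}; t_i]`: the ring `𝓡/J` is a domain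
iff `R₀` is a domain, and `𝓡/J` is normal iff `R₀` is normal. -/
theorem stmt_16 (R₀ : Type u) [CommRing R₀] [IsNoetherianRing R₀] (f : ℕ) (hf : 4 ≤ f) :
    (IsDomain (MvPolynomial (Var f) R₀ ⧸ Jt R₀ f) ↔ IsDomain R₀) ∧
      (IsNormalRing (MvPolynomial (Var f) R₀ ⧸ Jt R₀ f) ↔ IsNormalRing R₀) :=
  stmt_16_general R₀ f hf

end AluffiStmt
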